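/- For every n ≥ 1 and every bijection σ : Fin n → Fin n, there exists a triple diagram without closed strands realizing σ; that is, all n! pairings of the n 'in' boundary points with the n 'out' boundary points are achievable by triple diagrams consisting only of arcs. -/

import Mathlib

open Set Metric Real
open scoped RealInnerProductSpace

noncomputable section

/-- The Euclidean plane. -/
abbrev Plane : Type := EuclideanSpace ℝ (Fin 2)

/-- The point of the unit circle at angle `θ`. -/
def unitPt (θ : ℝ) : Plane := (WithLp.equiv 2 (Fin 2 → ℝ)).symm ![Real.cos θ, Real.sin θ]

/-- The `2n` marked boundary points `v_k = (cos (kπ/n), sin (kπ/n))`. -/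
def bpoint (n k : ℕ) : Plane := unitPt (k * Real.pi / n)

/-- The underlying geometric data of a diagram in the closed unit disk:
`na` smooth immersed arcs with endpoints on the boundary circle (transverse to it,
pairwise distinct endpoints, interior in the open disk) and `nl` smooth immersed
loops (1-periodic) contained in the open disk. -/
structure PreDiagram (na nl : ℕ) where
  arc : Fin na → ℝ → Plane
  loop : Fin nl → ℝ → Plane
  arc_smooth : ∀ i, ContDiff ℝ (⊤ : ℕ∞) (arc i)
  loop_smooth : ∀ i, ContDiff ℝ (⊤ : ℕ∞) (loop i)
  loop_periodic : ∀ i, Function.Periodic (loop i) 1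
  arc_immersed : ∀ i, ∀ t ∈ Icc (0:ℝ) 1, deriv (arc i) t ≠ 0
  loop_immersed : ∀ i t, deriv (loop i) t ≠ 0
  arc_in_disk : ∀ i, ∀ t ∈ Icc (0:ℝ) 1, ‖arc i t‖ ≤ 1
  arc_interior : ∀ i, ∀ t ∈ Ioo (0:ℝ) 1, ‖arc i t‖ < 1
  arc_start_bdry : ∀ i, ‖arc i 0‖ = 1
  arc_end_bdry : ∀ i, ‖arc i 1‖ = 1
  arc_transverse_start : ∀ i, ⟪deriv (arc i) 0, arc i 0⟫ ≠ 0
  arc_transverse_end : ∀ i, ⟪deriv (arc i) 1, arc i 1⟫ ≠ 0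
  loop_in_disk : ∀ i t, ‖loop i t‖ < 1
  endpoints_distinct :
    Function.Injective (Sum.elim (fun i => arc i 0) (fun i => arc i 1) :
      Fin na ⊕ Fin na → Plane)

variable {na nl : ℕ}

/-- The passages of the strands of a diagram through the point `p`: parameter values
(with the strand they belong to) mapping to `p`.  For arcs the relevant parameters lie in
`(0,1)`; for loops we take one period `[0,1)`. -/
def PreDiagram.passages (D : PreDiagram na nl) (p : Plane) :
    Set ((Fin na × ℝ) ⊕ (Fin nl × ℝ)) :=
  Sum.elim (fun q => q.2 ∈ Ioo (0:ℝ) 1 ∧ D.arc q.1 q.2 = p)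
           (fun q => q.2 ∈ Ico (0:ℝ) 1 ∧ D.loop q.1 q.2 = p)

/-- The (forward) tangent vector of the branch through a given passage. -/
def PreDiagram.tangent (D : PreDiagram na nl) :
    (Fin na × ℝ) ⊕ (Fin nl × ℝ) → Plane :=
  Sum.elim (fun q => deriv (D.arc q.1) q.2) (fun q => deriv (D.loop q.1) q.2)

/-- A multiple point: a point traversed more than once by the strands,
counting with multiplicity in the parameters. -/
def PreDiagram.IsMultiplePoint (D : PreDiagram na nl) (p : Plane) : Prop :=
  ¬ (D.passages p).Subsingleton

/-- A triple diagram: a diagram whose set of multiple points is finite, such that through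
each multiple point exactly three branches pass, with pairwise linearly independent
tangent vectors, and such that at each such triple point the six tangent rays of the
three branches alternate between outgoing and incoming in cyclic order (equivalently,
some positive combination of the three forward tangent vectors vanishes). -/
structure TripleDiagram (na nl : ℕ) extends PreDiagram na nl where
  multiple_finite : {p : Plane | toPreDiagram.IsMultiplePoint p}.Finite
  triple : ∀ p : Plane, toPreDiagram.IsMultiplePoint p →
    (toPreDiagram.passages p).ncard = 3
  branches_transverse : ∀ p : Plane, toPreDiagram.IsMultiplePoint p →
    ∀ q₁ ∈ toPreDiagram.passages p, ∀ q₂ ∈ toPreDiagram.passages p, q₁ ≠ q₂ →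
      LinearIndependent ℝ ![toPreDiagram.tangent q₁, toPreDiagram.tangent q₂]
  alternating : ∀ p : Plane, toPreDiagram.IsMultiplePoint p →
    ∃ q₁ q₂ q₃, toPreDiagram.passages p = {q₁, q₂, q₃} ∧
      ∃ a b c : ℝ, 0 < a ∧ 0 < b ∧ 0 < c ∧
        a • toPreDiagram.tangent q₁ + b • toPreDiagram.tangent q₂ +
          c • toPreDiagram.tangent q₃ = 0

/-- The number of triple points of a triple diagram. -/
def TripleDiagram.tripleCount (D : TripleDiagram na nl) : ℕ :=
  {p : Plane | D.toPreDiagram.IsMultiplePoint p}.ncard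

/-- A triple diagram (with `n` arcs) realizes the bijection `σ` if its `i`-th arc runs from
the 'in' point `v_{2i}` to the 'out' point `v_{2σ(i)+1}`. -/
def Realizes {n nl : ℕ} (D : TripleDiagram n nl) (σ : Equiv.Perm (Fin n)) : Prop :=
  ∀ i : Fin n, D.arc i 0 = bpoint n (2 * (i : ℕ)) ∧ D.arc i 1 = bpoint n (2 * (σ i : ℕ) + 1)

/-- `N(σ)`: the number of ordered pairs `(i,j)`, `i ≠ j`, such that with `a = 2i`, `b = 2j`,
`c = 2σ(i)+1`, `d = 2σ(j)+1` in `{0,…,2n−1}`, either `a < b < c < d` or `d < c < b < a`. -/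
def Ncross (n : ℕ) (σ : Equiv.Perm (Fin n)) : ℕ :=
  (Finset.univ.filter fun ij : Fin n × Fin n =>
    ij.1 ≠ ij.2 ∧
      ((2 * (ij.1 : ℕ) < 2 * (ij.2 : ℕ) ∧
        2 * (ij.2 : ℕ) < 2 * (σ ij.1 : ℕ) + 1 ∧
        2 * (σ ij.1 : ℕ) + 1 < 2 * (σ ij.2 : ℕ) + 1) ∨
       (2 * (σ ij.2 : ℕ) + 1 < 2 * (σ ij.1 : ℕ) + 1 ∧
        2 * (σ ij.1 : ℕ) + 1 < 2 * (ij.2 : ℕ) ∧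
        2 * (ij.2 : ℕ) < 2 * (ij.1 : ℕ)))).card

end

/-!
Let `n` points on a line perform a word of adjacent transpositions carrying `i` to `σ i`, so that
they collide only at half-integer positions `k + 1/2`, two at a time and with opposite velocities.
Draw this motion in logarithmic polar coordinates, with position as angle and time as depth: arcs
enter the disk at the integer angles `i`, cross while going in, turn near the deepest level from
the angle `σ i` to `σ i + 1/2`, and leave radially. The depth is symmetric in time, so every
collision, at the angle `k + 1/2`, is also traversed by the arc leaving along that ray. There the
two ingoing velocities add up to an inward radial vector, a negative multiple of the velocity of
the leaving arc, so the three branches alternate; no other points are traversed twice.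
-/

open scoped ContDiff
open Filter Topology

noncomputable section

/-! ### Real numbers -/

lemma natCast_add_eq_natCast_add_iff {a b : ℕ} {u v : ℝ} (huv : |u - v| < 1) :
    (a : ℝ) + u = b + v ↔ a = b ∧ u = v := by
  refine ⟨fun h => ?_, by rintro ⟨rfl, rfl⟩; rfl⟩
  have hab : |(b : ℤ) - a| < 1 := by
    have : (b : ℝ) - a = u - v := by linarith
    exact_mod_cast this ▸ huv
  obtain rfl : a = b := by have := Int.abs_lt_one_iff.1 hab; omega
  exact ⟨rfl, add_left_cancel h⟩

lemma expNegInvGlue_lt_expNegInvGlue {x y : ℝ} (hxy : x < y) (hy : 0 < y) :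
    expNegInvGlue x < expNegInvGlue y := by
  rcases le_or_gt x 0 with hx | hx
  · rw [expNegInvGlue.zero_of_nonpos hx]
    exact expNegInvGlue.pos_of_pos hy
  · simp only [expNegInvGlue, hx.not_ge, hy.not_ge, if_false]
    gcongr

lemma hasDerivAt_expNegInvGlue (x : ℝ) :
    HasDerivAt expNegInvGlue (x⁻¹ ^ 2 * expNegInvGlue x) x := by
  simpa using expNegInvGlue.hasDerivAt_polynomial_eval_inv_mul 1 x

lemma smoothTransition_one_sub (t : ℝ) :
    smoothTransition (1 - t) = 1 - smoothTransition t := by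
  have := (smoothTransition.pos_denom t).ne'
  rw [smoothTransition, smoothTransition, sub_sub_cancel, add_comm (expNegInvGlue (1 - t)),
    eq_sub_iff_add_eq, ← add_div, add_comm, div_self this]

lemma smoothTransition_half : smoothTransition (1 / 2) = 1 / 2 := by
  have := smoothTransition_one_sub (1 / 2)
  rw [sub_half] at this
  linarith

lemma smoothTransition_lt_half {t : ℝ} (ht : t < 1 / 2) : smoothTransition t < 1 / 2 := by
  have := expNegInvGlue_lt_expNegInvGlue (show t < 1 - t by linarith) (by linarith)
  rw [smoothTransition, div_lt_iff₀ (smoothTransition.pos_denom t)]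
  linarith

lemma smoothTransition_eq_half_iff {t : ℝ} : smoothTransition t = 1 / 2 ↔ t = 1 / 2 := by
  refine ⟨fun h => ?_, by rintro rfl; exact smoothTransition_half⟩
  rcases lt_trichotomy t (1 / 2) with ht | ht | ht
  · exact absurd h (smoothTransition_lt_half ht).ne
  · exact ht
  · have := smoothTransition_lt_half (show 1 - t < 1 / 2 by linarith)
    rw [smoothTransition_one_sub] at this
    linarith

lemma hasDerivAt_smoothTransition_half : HasDerivAt smoothTransition 2 (1 / 2) := by
  set e := expNegInvGlue (1 / 2)
  have he : e ≠ 0 := (expNegInvGlue.pos_of_pos one_half_pos).ne'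
  have hglue : HasDerivAt expNegInvGlue (4 * e) (1 / 2) :=
    (hasDerivAt_expNegInvGlue (1 / 2)).congr_deriv (by norm_num [e])
  have hreflect : HasDerivAt (fun t => expNegInvGlue (1 - t)) (-(4 * e)) (1 / 2) :=
    HasDerivAt.comp_const_sub 1 (1 / 2) (by rwa [sub_half])
  refine (hglue.div (hglue.add hreflect) (smoothTransition.pos_denom _).ne').congr_deriv ?_
  have hvalue : (expNegInvGlue + fun t => expNegInvGlue (1 - t)) (1 / 2) = 2 * e := by
    rw [Pi.add_apply, sub_half, two_mul]
  rw [hvalue, add_neg_cancel, mul_zero, sub_zero]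
  field_simp
  norm_num

lemma fin_val_mem_Icc {n : ℕ} (i : Fin n) : ((i : ℕ) : ℝ) ∈ Icc 0 ((n : ℝ) - 1) := by
  have : (i : ℕ) + 1 ≤ n := i.2
  exact ⟨by positivity, by rw [le_sub_iff_add_le]; exact_mod_cast this⟩

lemma two_pi_div_natCast_pos {n : ℕ} (hn : 0 < n) : 0 < 2 * π / n :=
  div_pos Real.two_pi_pos (Nat.cast_pos.2 hn)

/-! ### The logarithmic chart of the disk -/

/-- The point of the plane with complex coordinate `exp z`; the left half plane `z.re ≤ 0` covers
the punctured closed unit disk, with boundary circle `z.re = 0`. -/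
def expPlane (z : ℂ) : Plane := Complex.orthonormalBasisOneI.repr (Complex.exp z)

/-- The derivative of `expPlane` at `z`. -/
def expPlaneDeriv (z : ℂ) : ℂ →L[ℝ] Plane :=
  (Complex.orthonormalBasisOneI.repr : ℂ →L[ℝ] Plane) ∘L ContinuousLinearMap.mul ℝ ℂ (Complex.exp z)

lemma hasFDerivAt_expPlane (z : ℂ) : HasFDerivAt expPlane (expPlaneDeriv z) z := by
  have hexp : HasFDerivAt Complex.exp (ContinuousLinearMap.mul ℝ ℂ (Complex.exp z)) z := by
    refine ((Complex.hasDerivAt_exp z).hasFDerivAt.restrictScalars ℝ).congr_fderiv ?_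
    ext w
    exact mul_comm w (Complex.exp z)
  exact (Complex.orthonormalBasisOneI.repr : ℂ →L[ℝ] Plane).hasFDerivAt.comp z hexp

lemma contDiff_expPlane : ContDiff ℝ ∞ expPlane :=
  Complex.orthonormalBasisOneI.repr.contDiff.comp Complex.contDiff_exp

lemma norm_expPlane (z : ℂ) : ‖expPlane z‖ = Real.exp z.re := by
  rw [expPlane, LinearIsometryEquiv.norm_map, Complex.norm_exp]

lemma unitPt_eq_expPlane (θ : ℝ) : unitPt θ = expPlane (θ * Complex.I) := by
  ext k
  fin_cases k <;> simp [unitPt, expPlane, Complex.exp_re, Complex.exp_im]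

lemma injOn_expPlane : InjOn expPlane {z | z.im ∈ Ico 0 (2 * π)} := by
  intro z hz w hw h
  obtain ⟨k, hk⟩ := Complex.exp_eq_exp_iff_exists_int.1
    (Complex.orthonormalBasisOneI.repr.injective h)
  have him : z.im - w.im = k * (2 * π) := by simp [hk]
  have hturn : |k * (2 * π)| < 2 * π := by
    rw [← him, abs_sub_lt_iff]
    constructor <;> linarith [hz.1, hz.2, hw.1, hw.2]
  rw [abs_mul, abs_of_pos Real.two_pi_pos, mul_lt_iff_lt_one_left Real.two_pi_pos] at hturn
  obtain rfl : k = 0 := Int.abs_lt_one_iff.1 (by exact_mod_cast hturn)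
  simpa using hk

lemma injective_expPlaneDeriv (z : ℂ) : Function.Injective (expPlaneDeriv z) :=
  Complex.orthonormalBasisOneI.repr.injective.comp (mul_right_injective₀ (Complex.exp_ne_zero z))

lemma inner_expPlaneDeriv_expPlane (z w : ℂ) :
    ⟪expPlaneDeriv z w, expPlane z⟫ = Real.exp z.re ^ 2 * w.re := by
  have : ⟪expPlaneDeriv z w, expPlane z⟫ = ⟪Complex.exp z * w, Complex.exp z⟫ :=
    Complex.orthonormalBasisOneI.repr.inner_map_map _ _
  rw [this, Complex.inner, ← Complex.norm_exp, ← Complex.normSq_eq_norm_sq, map_mul, ← mul_assoc,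
    Complex.mul_conj, Complex.re_ofReal_mul, Complex.conj_re]

lemma linearIndependent_pair_of_re_mul_im_ne {u v : ℂ} (h : u.re * v.im ≠ u.im * v.re) :
    LinearIndependent ℝ ![u, v] := by
  rw [LinearIndependent.pair_iff]
  intro s t hst
  have hre : s * u.re + t * v.re = 0 := by simpa using congrArg Complex.re hst
  have him : s * u.im + t * v.im = 0 := by simpa using congrArg Complex.im hst
  have hdet : u.re * v.im - u.im * v.re ≠ 0 := sub_ne_zero.2 h
  constructor
  · refine (mul_eq_zero.1 ?_).resolve_right hdet
    linear_combination v.im * hre - v.re * him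
  · refine (mul_eq_zero.1 ?_).resolve_right hdet
    linear_combination u.re * him - u.im * hre

lemma linearIndependent_expPlaneDeriv {z u v : ℂ} (h : u.re * v.im ≠ u.im * v.re) :
    LinearIndependent ℝ ![expPlaneDeriv z u, expPlaneDeriv z v] := by
  rw [LinearIndependent.pair_iff]
  intro s t hst
  rw [← map_smul, ← map_smul, ← map_add] at hst
  exact LinearIndependent.pair_iff.1 (linearIndependent_pair_of_re_mul_im_ne h) s t
    (injective_expPlaneDeriv z (hst.trans (map_zero _).symm))

lemma linearIndependent_pair_of_smul_add_smul_add_smul_eq_zero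
    {K V : Type*} [Field K] [AddCommGroup V] [Module K V]
    {u v w : V} {a b c : K} (huv : LinearIndependent K ![u, v]) (ha : a ≠ 0) (hc : c ≠ 0)
    (h : a • u + b • v + c • w = 0) : LinearIndependent K ![v, w] := by
  rw [LinearIndependent.pair_iff] at huv ⊢
  intro s t hst
  have hcomb : (t * a) • u + (t * b - c * s) • v = 0 := by
    calc (t * a) • u + (t * b - c * s) • v
        = t • (a • u + b • v + c • w) - c • (s • v + t • w) := by module
      _ = 0 := by rw [h, hst, smul_zero, smul_zero, sub_zero]
  obtain ⟨hta, hs⟩ := huv _ _ hcomb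
  obtain rfl : t = 0 := (mul_eq_zero.1 hta).resolve_right ha
  exact ⟨by simpa [hc] using hs, rfl⟩

/-! ### Triple points -/

section TriplePoint

variable {na nl : ℕ}

/-- A point traversed exactly three times, with branches that are pairwise transverse and
alternately oriented; the conditions on the branches are reduced to one independent pair of
tangents and one vanishing positive combination. -/
def PreDiagram.IsTriplePoint (D : PreDiagram na nl) (p : Plane) : Prop :=
  ∃ q₁ q₂ q₃, D.passages p = {q₁, q₂, q₃} ∧
    LinearIndependent ℝ ![D.tangent q₁, D.tangent q₂] ∧
      ∃ a b c : ℝ, 0 < a ∧ 0 < b ∧ 0 < c ∧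
        a • D.tangent q₁ + b • D.tangent q₂ + c • D.tangent q₃ = 0

namespace PreDiagram.IsTriplePoint

variable {D : PreDiagram na nl} {p : Plane}

lemma exists_pairwise_linearIndependent (h : D.IsTriplePoint p) :
    ∃ q₁ q₂ q₃, D.passages p = {q₁, q₂, q₃} ∧
      LinearIndependent ℝ ![D.tangent q₁, D.tangent q₂] ∧
      LinearIndependent ℝ ![D.tangent q₂, D.tangent q₃] ∧
      LinearIndependent ℝ ![D.tangent q₃, D.tangent q₁] := by
  obtain ⟨q₁, q₂, q₃, hpass, h₁₂, a, b, c, ha, hb, hc, hsum⟩ := h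
  have h₂₃ := linearIndependent_pair_of_smul_add_smul_add_smul_eq_zero h₁₂ ha.ne' hc.ne' hsum
  refine ⟨q₁, q₂, q₃, hpass, h₁₂, h₂₃, ?_⟩
  have hrot : b • D.tangent q₂ + c • D.tangent q₃ + a • D.tangent q₁ = 0 := by
    rw [← hsum]
    abel
  exact linearIndependent_pair_of_smul_add_smul_add_smul_eq_zero h₂₃ hb.ne' ha.ne' hrot

lemma ncard_passages (h : D.IsTriplePoint p) : (D.passages p).ncard = 3 := by
  obtain ⟨q₁, q₂, q₃, hpass, h₁₂, h₂₃, h₃₁⟩ := h.exists_pairwise_linearIndependent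
  have ne_of_indep {q q'} (hqq' : LinearIndependent ℝ ![D.tangent q, D.tangent q']) : q ≠ q' := by
    rintro rfl
    simpa using hqq'.injective.ne zero_ne_one
  rw [Set.ncard_eq_three]
  exact ⟨q₁, q₂, q₃, ne_of_indep h₁₂, (ne_of_indep h₃₁).symm, ne_of_indep h₂₃, hpass⟩

lemma linearIndependent_tangent (h : D.IsTriplePoint p) {q q'} (hq : q ∈ D.passages p)
    (hq' : q' ∈ D.passages p) (hne : q ≠ q') :
    LinearIndependent ℝ ![D.tangent q, D.tangent q'] := by
  obtain ⟨q₁, q₂, q₃, hpass, h₁₂, h₂₃, h₃₁⟩ := h.exists_pairwise_linearIndependent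
  rw [hpass] at hq hq'
  rcases hq with rfl | rfl | rfl <;> rcases hq' with rfl | rfl | rfl <;>
    first | exact absurd rfl hne | assumption | (rw [LinearIndependent.pair_symm_iff]; assumption)

end PreDiagram.IsTriplePoint

/-- The triple diagram underlying a diagram all of whose multiple points are triple points. -/
def TripleDiagram.ofIsTriplePoint (D : PreDiagram na nl) (hfin : {p | D.IsMultiplePoint p}.Finite)
    (htriple : ∀ p, D.IsMultiplePoint p → D.IsTriplePoint p) : TripleDiagram na nl where
  toPreDiagram := D
  multiple_finite := hfin
  triple p hp := (htriple p hp).ncard_passages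
  branches_transverse p hp _ hq _ hq' := (htriple p hp).linearIndependent_tangent hq hq'
  alternating p hp := by
    obtain ⟨q₁, q₂, q₃, hpass, -, hsum⟩ := htriple p hp
    exact ⟨q₁, q₂, q₃, hpass, hsum⟩

end TriplePoint

/-! ### Wirings -/

/-- The strands `i ≠ j` of the family `x` meet at time `t`, away from all other strands, and pass
through each other with opposite nonzero velocities. -/
structure IsBalancedCrossing {ι : Type*} (x : ι → ℝ → ℝ) (i j : ι) (t : ℝ) : Prop where
  ne : i ≠ j
  eq_iff : ∀ l, x l t = x i t ↔ l = i ∨ l = j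
  deriv_ne_zero : deriv (x i) t ≠ 0
  deriv_eq_neg : deriv (x j) t = -deriv (x i) t

namespace IsBalancedCrossing

variable {ι κ : Type*} {x : ι → ℝ → ℝ} {y : κ → ℝ → ℝ} {t : ℝ}

lemma apply_eq {i j : ι} (h : IsBalancedCrossing x i j t) : x j t = x i t :=
  (h.eq_iff j).2 (Or.inr rfl)

lemma symm {i j : ι} (h : IsBalancedCrossing x i j t) : IsBalancedCrossing x j i t where
  ne := h.ne.symm
  eq_iff l := by rw [h.apply_eq, h.eq_iff, or_comm]
  deriv_ne_zero := by rw [h.deriv_eq_neg]; exact neg_ne_zero.2 h.deriv_ne_zero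
  deriv_eq_neg := by rw [h.deriv_eq_neg, neg_neg]

lemma reparametrize {e : κ → ι} (he : Function.Injective e) {m b : ℝ} (hm : m ≠ 0)
    (hy : ∀ l, y l =ᶠ[𝓝 t] fun s => x (e l) (m * s - b)) {i j : κ}
    (h : IsBalancedCrossing x (e i) (e j) (m * t - b)) : IsBalancedCrossing y i j t := by
  have hval (l) : y l t = x (e l) (m * t - b) := (hy l).eq_of_nhds
  have hderiv (l) : deriv (y l) t = m * deriv (x (e l)) (m * t - b) := by
    rw [(hy l).deriv_eq, deriv_comp_mul_left m (fun s => x (e l) (s - b)), deriv_comp_sub_const,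
      smul_eq_mul]
  exact
    { ne := fun hij => h.ne (congrArg e hij)
      eq_iff := fun l => by rw [hval, hval, h.eq_iff, he.eq_iff, he.eq_iff]
      deriv_ne_zero := by rw [hderiv]; exact mul_ne_zero hm h.deriv_ne_zero
      deriv_eq_neg := by rw [hderiv, hderiv, h.deriv_eq_neg, mul_neg] }

end IsBalancedCrossing

/-- The half-integer positions below which the strands will leave the disk, in units in which the
'in' points are the integers. -/
def exitPositions (n : ℕ) : Set ℝ := range fun k : Fin n => ((k : ℕ) : ℝ) + 1 / 2

lemma natCast_notMem_exitPositions {n : ℕ} (a : ℕ) : (a : ℝ) ∉ exitPositions n := by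
  rintro ⟨k, hk⟩
  have := (natCast_add_eq_natCast_add_iff (a := k) (b := a) (u := 1 / 2) (v := 0)
    (by norm_num [abs_lt])).1 (by simpa using hk)
  norm_num at this

/-- A motion of `n` points on the line during `[0,1]`, carrying `i` to `σ i`, in which collisions
occur exactly at the exit positions and are balanced crossings of two points. Smooth concatenation
needs the motion to be constant outside `[0,1]`. -/
structure Wiring {n : ℕ} (σ : Equiv.Perm (Fin n)) where
  pos : Fin n → ℝ → ℝ
  contDiff : ∀ i, ContDiff ℝ ∞ (pos i)
  pos_of_nonpos : ∀ i t, t ≤ 0 → pos i t = (i : ℕ)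
  pos_of_one_le : ∀ i t, 1 ≤ t → pos i t = (σ i : ℕ)
  pos_mem_Icc : ∀ i t, pos i t ∈ Icc 0 ((n : ℝ) - 1)
  mem_exitPositions : ∀ i j t, i ≠ j → pos i t = pos j t → pos i t ∈ exitPositions n
  exists_crossing : ∀ i t, pos i t ∈ exitPositions n → ∃ j, IsBalancedCrossing pos i j t
  finite_crossings : {t | ∃ i, pos i t ∈ exitPositions n}.Finite

/-- The motionless wiring. -/
def Wiring.refl (n : ℕ) : Wiring (1 : Equiv.Perm (Fin n)) where
  pos i _ := (i : ℕ)
  contDiff _ := contDiff_const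
  pos_of_nonpos _ _ _ := rfl
  pos_of_one_le _ _ _ := rfl
  pos_mem_Icc i _ := fin_val_mem_Icc i
  mem_exitPositions _ _ _ hij h := absurd (Fin.ext (Nat.cast_injective h)) hij
  exists_crossing _ _ h := absurd h (natCast_notMem_exitPositions _)
  finite_crossings := by simp [natCast_notMem_exitPositions]

section AdjacentSwap

variable {m : ℕ} {k : Fin m} {i j : Fin (m + 1)} {t : ℝ}

/-- The motion exchanging the positions `k` and `k + 1` by smooth interpolation. -/
def swapPos (k : Fin m) (i : Fin (m + 1)) (t : ℝ) : ℝ :=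
  (i : ℕ) + smoothTransition t * ((Equiv.swap k.castSucc k.succ i : ℕ) - (i : ℕ))

lemma swapPos_castSucc (k : Fin m) (t : ℝ) :
    swapPos k k.castSucc t = (k : ℕ) + smoothTransition t := by
  simp [swapPos]

lemma swapPos_succ (k : Fin m) (t : ℝ) :
    swapPos k k.succ t = (k : ℕ) + (1 - smoothTransition t) := by
  simp only [swapPos, Equiv.swap_apply_right, Fin.val_castSucc, Fin.val_succ, Nat.cast_succ]
  ring

lemma swapPos_of_ne (hi : i ≠ k.castSucc) (hi' : i ≠ k.succ) (t : ℝ) :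
    swapPos k i t = (i : ℕ) := by
  simp [swapPos, Equiv.swap_apply_of_ne_of_ne hi hi']

lemma swap_lt_swap_or_of_lt (k : Fin m) (hij : i < j) :
    Equiv.swap k.castSucc k.succ i < Equiv.swap k.castSucc k.succ j ∨
      i = k.castSucc ∧ j = k.succ := by
  simp only [Equiv.swap_apply_def, Fin.ext_iff, Fin.lt_def, Fin.val_castSucc, Fin.val_succ] at *
  split_ifs <;> grind

lemma swapPos_eq_of_lt (hij : i < j) (h : swapPos k i t = swapPos k j t) :
    i = k.castSucc ∧ t = 1 / 2 := by
  rcases swap_lt_swap_or_of_lt k hij with hlt | ⟨rfl, rfl⟩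
  · have hstart : ((i : ℕ) : ℝ) + 1 ≤ (j : ℕ) := by exact_mod_cast hij
    have hend : ((Equiv.swap k.castSucc k.succ i : ℕ) : ℝ) + 1 ≤
        (Equiv.swap k.castSucc k.succ j : ℕ) := by exact_mod_cast hlt
    simp only [swapPos] at h
    nlinarith [smoothTransition.nonneg t, smoothTransition.le_one t]
  · rw [swapPos_castSucc, swapPos_succ] at h
    exact ⟨rfl, smoothTransition_eq_half_iff.1 (by linarith)⟩

lemma swapPos_castSucc_half (k : Fin m) : swapPos k k.castSucc (1 / 2) = (k : ℕ) + 1 / 2 := by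
  rw [swapPos_castSucc, smoothTransition_half]

lemma swapPos_succ_half (k : Fin m) : swapPos k k.succ (1 / 2) = (k : ℕ) + 1 / 2 := by
  rw [swapPos_succ, smoothTransition_half]
  norm_num

lemma swapPos_mem_exitPositions_of_eq (hij : i ≠ j) (h : swapPos k i t = swapPos k j t) :
    swapPos k i t ∈ exitPositions (m + 1) := by
  wlog hlt : i < j generalizing i j
  · rw [h]
    exact this hij.symm h.symm (hij.lt_or_gt.resolve_left hlt)
  obtain ⟨rfl, rfl⟩ := swapPos_eq_of_lt hlt h
  exact ⟨k.castSucc, (swapPos_castSucc_half k).symm⟩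

lemma swapPos_mem_exitPositions_imp (h : swapPos k i t ∈ exitPositions (m + 1)) :
    t = 1 / 2 ∧ (i = k.castSucc ∨ i = k.succ) := by
  have hS : |smoothTransition t - 1 / 2| < 1 := by
    rw [abs_lt]
    constructor <;> linarith [smoothTransition.nonneg t, smoothTransition.le_one t]
  have hS' : |1 - smoothTransition t - 1 / 2| < 1 := by
    rwa [← abs_neg, show -(1 - smoothTransition t - 1 / 2) = smoothTransition t - 1 / 2 by ring]
  by_cases hi : i = k.castSucc
  · obtain ⟨l, hl⟩ := h
    rw [hi, swapPos_castSucc] at hl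
    have := ((natCast_add_eq_natCast_add_iff hS).1 hl.symm).2
    exact ⟨smoothTransition_eq_half_iff.1 this, Or.inl hi⟩
  · by_cases hi' : i = k.succ
    · obtain ⟨l, hl⟩ := h
      rw [hi', swapPos_succ] at hl
      have := ((natCast_add_eq_natCast_add_iff hS').1 hl.symm).2
      exact ⟨smoothTransition_eq_half_iff.1 (by linarith), Or.inr hi'⟩
    · rw [swapPos_of_ne hi hi'] at h
      exact absurd h (natCast_notMem_exitPositions _)

lemma isBalancedCrossing_swapPos (k : Fin m) :
    IsBalancedCrossing (swapPos k) k.castSucc k.succ (1 / 2) := by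
  have hderiv (i : Fin (m + 1)) : deriv (swapPos k i) (1 / 2) =
      2 * ((Equiv.swap k.castSucc k.succ i : ℕ) - (i : ℕ)) :=
    ((hasDerivAt_smoothTransition_half.mul_const _).const_add _).deriv
  refine ⟨Fin.castSucc_lt_succ.ne, fun l => ⟨fun hl => ?_, ?_⟩, ?_, ?_⟩
  · refine (swapPos_mem_exitPositions_imp (k := k) (t := 1 / 2) ?_).2
    exact ⟨k.castSucc, (hl.trans (swapPos_castSucc_half k)).symm⟩
  · rintro (rfl | rfl)
    · rfl
    · rw [swapPos_castSucc_half, swapPos_succ_half]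
  · rw [hderiv]
    simp
  · rw [hderiv, hderiv]
    simp

lemma swapPos_mem_Icc (k : Fin m) (i : Fin (m + 1)) (t : ℝ) :
    swapPos k i t ∈ Icc 0 (((m + 1 : ℕ) : ℝ) - 1) :=
  (convex_Icc _ _).add_smul_sub_mem (fin_val_mem_Icc i) (fin_val_mem_Icc _)
    ⟨smoothTransition.nonneg t, smoothTransition.le_one t⟩

/-- The wiring with a single crossing, that of the neighbours `k` and `k + 1`. -/
def Wiring.adjacentSwap (k : Fin m) : Wiring (Equiv.swap k.castSucc k.succ) where
  pos := swapPos k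
  contDiff _ := contDiff_const.add (smoothTransition.contDiff.mul contDiff_const)
  pos_of_nonpos i t ht := by simp [swapPos, smoothTransition.zero_of_nonpos ht]
  pos_of_one_le i t ht := by simp [swapPos, smoothTransition.one_of_one_le ht]
  pos_mem_Icc := swapPos_mem_Icc k
  mem_exitPositions _ _ _ := swapPos_mem_exitPositions_of_eq
  exists_crossing i t h := by
    obtain ⟨rfl, rfl | rfl⟩ := swapPos_mem_exitPositions_imp h
    · exact ⟨_, isBalancedCrossing_swapPos k⟩
    · exact ⟨_, (isBalancedCrossing_swapPos k).symm⟩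
  finite_crossings :=
    (finite_singleton (1 / 2)).subset fun _ ⟨_, h⟩ => (swapPos_mem_exitPositions_imp h).1

end AdjacentSwap

namespace Wiring

variable {n : ℕ} {σ τ : Equiv.Perm (Fin n)}

section Concat

variable (W : Wiring σ) (V : Wiring τ) (i : Fin n) {t : ℝ}

/-- The positions during `W` at double speed followed by `V` at double speed. -/
def concatPos (i : Fin n) (t : ℝ) : ℝ :=
  W.pos i (2 * t) + (V.pos (σ i) (2 * t - 1) - (σ i : ℕ))

lemma concatPos_of_le (ht : t ≤ 1 / 2) : concatPos W V i t = W.pos i (2 * t) := by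
  rw [concatPos, V.pos_of_nonpos _ _ (by linarith), sub_self, add_zero]

lemma concatPos_of_ge (ht : 1 / 2 ≤ t) : concatPos W V i t = V.pos (σ i) (2 * t - 1) := by
  rw [concatPos, W.pos_of_one_le _ _ (by linarith), add_sub_cancel]

lemma concatPos_half : concatPos W V i (1 / 2) = (σ i : ℕ) := by
  rw [concatPos_of_le W V i le_rfl, W.pos_of_one_le _ _ (by norm_num)]

lemma mem_exitPositions_of_concatPos_eq {i j : Fin n} (hij : i ≠ j)
    (h : concatPos W V i t = concatPos W V j t) : concatPos W V i t ∈ exitPositions n := by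
  rcases le_total t (1 / 2) with ht | ht
  · rw [concatPos_of_le W V _ ht, concatPos_of_le W V _ ht] at h
    rw [concatPos_of_le W V _ ht]
    exact W.mem_exitPositions i j _ hij h
  · rw [concatPos_of_ge W V _ ht, concatPos_of_ge W V _ ht] at h
    rw [concatPos_of_ge W V _ ht]
    exact V.mem_exitPositions _ _ _ (σ.injective.ne hij) h

lemma exists_isBalancedCrossing_concatPos {i : Fin n}
    (h : concatPos W V i t ∈ exitPositions n) :
    ∃ j, IsBalancedCrossing (concatPos W V) i j t := by
  rcases lt_trichotomy t (1 / 2) with ht | rfl | ht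
  · rw [concatPos_of_le W V i ht.le, ← sub_zero (2 * t)] at h
    obtain ⟨j, hj⟩ := W.exists_crossing i _ h
    refine ⟨j, hj.reparametrize (e := id) Function.injective_id two_ne_zero fun l => ?_⟩
    filter_upwards [gt_mem_nhds ht] with s hs
    rw [concatPos_of_le W V l hs.le, sub_zero, id_eq]
  · rw [concatPos_half] at h
    exact absurd h (natCast_notMem_exitPositions _)
  · rw [concatPos_of_ge W V i ht.le] at h
    obtain ⟨j, hj⟩ := V.exists_crossing _ _ h
    rw [← σ.apply_symm_apply j] at hj
    refine ⟨σ.symm j, hj.reparametrize σ.injective two_ne_zero fun l => ?_⟩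
    filter_upwards [lt_mem_nhds ht] with s hs
    exact concatPos_of_ge W V l hs.le

lemma finite_crossings_concatPos : {t | ∃ i, concatPos W V i t ∈ exitPositions n}.Finite := by
  have hdouble : Function.Injective fun t : ℝ => 2 * t := mul_right_injective₀ two_ne_zero
  have hdouble' : Function.Injective fun t : ℝ => 2 * t - 1 :=
    (sub_left_injective (b := (1 : ℝ))).comp hdouble
  refine ((W.finite_crossings.preimage hdouble.injOn).union
    (V.finite_crossings.preimage hdouble'.injOn)).subset ?_
  rintro t ⟨i, hi⟩
  rcases le_total t (1 / 2) with ht | ht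
  · exact Or.inl ⟨i, concatPos_of_le W V i ht ▸ hi⟩
  · exact Or.inr ⟨σ i, concatPos_of_ge W V i ht ▸ hi⟩

/-- The wiring `W` followed by the wiring `V`. -/
def concat : Wiring (τ * σ) where
  pos := concatPos W V
  contDiff i := ((W.contDiff i).comp (contDiff_const.mul contDiff_id)).add
    (((V.contDiff (σ i)).comp ((contDiff_const.mul contDiff_id).sub contDiff_const)).sub
      contDiff_const)
  pos_of_nonpos i t ht := by
    rw [concatPos_of_le W V i (by linarith), W.pos_of_nonpos _ _ (by linarith)]
  pos_of_one_le i t ht := by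
    rw [concatPos_of_ge W V i (by linarith), V.pos_of_one_le _ _ (by linarith),
      Equiv.Perm.mul_apply]
  pos_mem_Icc i t := by
    rcases le_total t (1 / 2) with ht | ht
    · exact concatPos_of_le W V i ht ▸ W.pos_mem_Icc i _
    · exact concatPos_of_ge W V i ht ▸ V.pos_mem_Icc _ _
  mem_exitPositions _ _ _ := mem_exitPositions_of_concatPos_eq W V
  exists_crossing _ _ := exists_isBalancedCrossing_concatPos W V
  finite_crossings := finite_crossings_concatPos W V

end Concat

theorem nonempty : ∀ {n : ℕ} (σ : Equiv.Perm (Fin n)), Nonempty (Wiring σ)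
  | 0, σ => Subsingleton.elim 1 σ ▸ ⟨refl 0⟩
  | m + 1, σ => by
    refine Submonoid.dense_induction _ (Equiv.Perm.mclosure_swap_castSucc_succ m) ?_ ⟨refl _⟩ ?_ σ
    · rintro _ ⟨k, rfl⟩
      exact ⟨adjacentSwap k⟩
    · rintro τ σ ⟨V⟩ ⟨W⟩
      exact ⟨W.concat V⟩

/-! ### Bending a wiring into the disk -/

section Angle

variable (W : Wiring σ) {a i j : Fin n} {s t : ℝ}

/-- The angle of the `i`-th arc at time `t`, in units of `2π / n`: the arc performs the wiring
during `[0, 1/3]` and advances by a half unit during `[1/3, 2/3]`. -/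
def angle (i : Fin n) (t : ℝ) : ℝ :=
  W.pos i (3 * t) + smoothTransition (3 * t - 1) / 2

lemma contDiff_angle (i : Fin n) : ContDiff ℝ ∞ (W.angle i) :=
  ((W.contDiff i).comp (contDiff_const.mul contDiff_id)).add
    ((smoothTransition.contDiff.comp
      ((contDiff_const.mul contDiff_id).sub contDiff_const)).div_const 2)

lemma angle_of_le (i : Fin n) (ht : t ≤ 1 / 3) : W.angle i t = W.pos i (3 * t) := by
  rw [angle, smoothTransition.zero_of_nonpos (by linarith), zero_div, add_zero]

lemma angle_of_ge (i : Fin n) (ht : 1 / 3 ≤ t) :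
    W.angle i t = (σ i : ℕ) + smoothTransition (3 * t - 1) / 2 := by
  rw [angle, W.pos_of_one_le _ _ (by linarith)]

lemma angle_of_two_thirds_le (i : Fin n) (ht : 2 / 3 ≤ t) :
    W.angle i t = (σ i : ℕ) + 1 / 2 := by
  rw [W.angle_of_ge i (by linarith), smoothTransition.one_of_one_le (by linarith)]

lemma angle_zero (i : Fin n) : W.angle i 0 = (i : ℕ) := by
  rw [W.angle_of_le i (by norm_num), W.pos_of_nonpos _ _ (by norm_num)]

lemma angle_one (i : Fin n) : W.angle i 1 = (σ i : ℕ) + 1 / 2 :=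
  W.angle_of_two_thirds_le i (by norm_num)

lemma angle_mem_Ico (i : Fin n) (t : ℝ) : W.angle i t ∈ Ico 0 (n : ℝ) := by
  obtain ⟨h₀, h₁⟩ := W.pos_mem_Icc i (3 * t)
  have := smoothTransition.nonneg (3 * t - 1)
  have := smoothTransition.le_one (3 * t - 1)
  constructor <;> rw [angle] <;> linarith

lemma deriv_angle_half (i : Fin n) : deriv (W.angle i) (1 / 2) = 3 := by
  have hinner : HasDerivAt (fun t : ℝ => 3 * t - 1) 3 (1 / 2) := by
    simpa using ((hasDerivAt_id (1 / 2 : ℝ)).const_mul 3).sub_const 1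
  have houter : HasDerivAt smoothTransition 2 (3 * (1 / 2) - 1) := by
    convert hasDerivAt_smoothTransition_half using 1
    norm_num
  have hturn := ((houter.comp (1 / 2) hinner).div_const 2).const_add ((σ i : ℕ) : ℝ)
  have heq : W.angle i =ᶠ[𝓝 (1 / 2)] fun t => (σ i : ℕ) + smoothTransition (3 * t - 1) / 2 := by
    filter_upwards [lt_mem_nhds (show (1 / 3 : ℝ) < 1 / 2 by norm_num)] with t ht
    exact W.angle_of_ge i ht.le
  rw [heq.deriv_eq]
  exact hturn.deriv.trans (by norm_num)

lemma deriv_angle_of_two_thirds_lt (i : Fin n) (ht : 2 / 3 < t) : deriv (W.angle i) t = 0 := by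
  have heq : W.angle i =ᶠ[𝓝 t] fun _ => (σ i : ℕ) + 1 / 2 := by
    filter_upwards [lt_mem_nhds ht] with u hu
    exact W.angle_of_two_thirds_le i hu.le
  rw [heq.deriv_eq, deriv_const]

lemma exists_isBalancedCrossing_angle (hs : s < 1 / 3) (h : W.angle a s ∈ exitPositions n) :
    ∃ b c, IsBalancedCrossing W.angle a b s ∧ W.angle a s = (σ c : ℕ) + 1 / 2 := by
  obtain ⟨k, hk⟩ := h
  have hcross : W.pos a (3 * s - 0) ∈ exitPositions n :=
    ⟨k, by rw [hk, sub_zero, W.angle_of_le a hs.le]⟩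
  obtain ⟨b, hb⟩ := W.exists_crossing a _ hcross
  refine ⟨b, σ.symm k, hb.reparametrize (e := id) Function.injective_id three_ne_zero fun l => ?_,
    by rw [σ.apply_symm_apply, ← hk]⟩
  filter_upwards [gt_mem_nhds hs] with u hu
  rw [W.angle_of_le l hu.le, sub_zero, id_eq]

lemma finite_angle_mem_exitPositions :
    {s | s < 1 / 3 ∧ ∃ i, W.angle i s ∈ exitPositions n}.Finite := by
  have htriple : Function.Injective fun t : ℝ => 3 * t := mul_right_injective₀ three_ne_zero
  refine (W.finite_crossings.preimage htriple.injOn).subset ?_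
  rintro s ⟨hs, i, hi⟩
  exact ⟨i, W.angle_of_le i hs.le ▸ hi⟩

lemma angle_mem_exitPositions_of_eq (hij : i ≠ j) (h : W.angle i t = W.angle j t) :
    t < 1 / 3 ∧ W.angle i t ∈ exitPositions n := by
  rcases lt_or_ge t (1 / 3) with ht | ht
  · rw [W.angle_of_le i ht.le, W.angle_of_le j ht.le] at h
    rw [W.angle_of_le i ht.le]
    exact ⟨ht, W.mem_exitPositions i j _ hij h⟩
  · rw [W.angle_of_ge i ht, W.angle_of_ge j ht, add_left_inj, Nat.cast_inj] at h
    exact absurd (σ.injective (Fin.ext h)) hij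

lemma angle_mem_exitPositions_of_eq_one_sub (ht : t < 1 / 2)
    (h : W.angle i t = W.angle j (1 - t)) : t < 1 / 3 ∧ W.angle i t ∈ exitPositions n := by
  rcases lt_or_ge t (1 / 3) with ht' | ht'
  · rw [W.angle_of_two_thirds_le j (by linarith)] at h
    exact ⟨ht', σ j, h.symm⟩
  · have hreflect : 3 * (1 - t) - 1 = 1 - (3 * t - 1) := by ring
    rw [W.angle_of_ge i ht', W.angle_of_ge j (by linarith), hreflect,
      smoothTransition_one_sub] at h
    have hclose : |smoothTransition (3 * t - 1) / 2 -
        (1 - smoothTransition (3 * t - 1)) / 2| < 1 := by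
      have := smoothTransition.nonneg (3 * t - 1)
      have := smoothTransition.le_one (3 * t - 1)
      rw [abs_lt]
      constructor <;> linarith
    have hhalf := ((natCast_add_eq_natCast_add_iff hclose).1 h).2
    have := smoothTransition_eq_half_iff.1 (show smoothTransition (3 * t - 1) = 1 / 2 by linarith)
    linarith

end Angle

section Arc

variable (W : Wiring σ) {a b c i j : Fin n} {s t t' : ℝ}

/-- The `i`-th arc in the logarithmic chart: its depth is symmetric under `t ↦ 1 - t`, so the way
in and the way out meet exactly at equal angles. -/
def logArc (i : Fin n) (t : ℝ) : ℂ := ⟨t * (t - 1), 2 * π / n * W.angle i t⟩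

lemma hasDerivAt_logArc (i : Fin n) (t : ℝ) :
    HasDerivAt (W.logArc i) ⟨2 * t - 1, 2 * π / n * deriv (W.angle i) t⟩ t := by
  have hdepth : HasDerivAt (fun t : ℝ => t * (t - 1)) (2 * t - 1) t := by
    refine ((hasDerivAt_id t).mul ((hasDerivAt_id t).sub_const 1)).congr_deriv ?_
    simp only [id_eq]
    ring
  have hangle := ((W.contDiff_angle i).differentiable (by simp) t).hasDerivAt.const_mul (2 * π / n)
  exact (Complex.equivRealProdCLM.symm : ℝ × ℝ →L[ℝ] ℂ).hasFDerivAt.comp_hasDerivAt t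
    (hdepth.prodMk hangle)

lemma contDiff_logArc (i : Fin n) : ContDiff ℝ ∞ (W.logArc i) :=
  Complex.equivRealProdCLM.symm.contDiff.comp
    ((contDiff_id.mul (contDiff_id.sub contDiff_const)).prodMk
      (contDiff_const.mul (W.contDiff_angle i)))

lemma logArc_im_mem_Ico (i : Fin n) (t : ℝ) : (W.logArc i t).im ∈ Ico 0 (2 * π) := by
  have hn : (0 : ℝ) < n := Nat.cast_pos.2 i.pos
  obtain ⟨h₀, h₁⟩ := W.angle_mem_Ico i t
  refine ⟨mul_nonneg (two_pi_div_natCast_pos i.pos).le h₀, ?_⟩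
  calc 2 * π / n * W.angle i t
      < 2 * π / n * n := mul_lt_mul_of_pos_left h₁ (two_pi_div_natCast_pos i.pos)
    _ = 2 * π := div_mul_cancel₀ _ hn.ne'

/-- The `i`-th arc of the triple diagram built from the wiring `W`. -/
def arc (i : Fin n) (t : ℝ) : Plane := expPlane (W.logArc i t)

lemma arc_eq_arc_iff :
    W.arc i t = W.arc j t' ↔ W.angle i t = W.angle j t' ∧ (t' = t ∨ t' = 1 - t) := by
  have hdepth : t * (t - 1) = t' * (t' - 1) ↔ t' = t ∨ t' = 1 - t := by
    rw [← sub_eq_zero (a := t'), ← sub_eq_zero (a := t') (b := 1 - t), ← mul_eq_zero,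
      ← sub_eq_zero, ← neg_eq_zero]
    ring_nf
  rw [arc, arc, injOn_expPlane.eq_iff (W.logArc_im_mem_Ico i t) (W.logArc_im_mem_Ico j t'),
    Complex.ext_iff, and_comm]
  exact and_congr (mul_right_inj' (two_pi_div_natCast_pos i.pos).ne') hdepth

lemma deriv_arc (i : Fin n) (t : ℝ) : deriv (W.arc i) t =
    expPlaneDeriv (W.logArc i t) ⟨2 * t - 1, 2 * π / n * deriv (W.angle i) t⟩ :=
  ((hasFDerivAt_expPlane _).comp_hasDerivAt t (W.hasDerivAt_logArc i t)).deriv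

lemma deriv_arc_ne_zero (i : Fin n) (t : ℝ) : deriv (W.arc i) t ≠ 0 := by
  rw [W.deriv_arc, ← map_zero (expPlaneDeriv (W.logArc i t)), (injective_expPlaneDeriv _).ne_iff]
  intro h
  obtain ⟨hre, him⟩ := Complex.ext_iff.1 h
  obtain rfl : t = 1 / 2 := by
    have : 2 * t - 1 = 0 := hre
    linarith
  rw [W.deriv_angle_half] at him
  exact mul_ne_zero (two_pi_div_natCast_pos i.pos).ne' three_ne_zero him

lemma norm_arc (i : Fin n) (t : ℝ) : ‖W.arc i t‖ = Real.exp (t * (t - 1)) :=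
  norm_expPlane _

lemma inner_deriv_arc_arc (i : Fin n) (t : ℝ) :
    ⟪deriv (W.arc i) t, W.arc i t⟫ = Real.exp (t * (t - 1)) ^ 2 * (2 * t - 1) := by
  rw [W.deriv_arc]
  exact inner_expPlaneDeriv_expPlane _ _

lemma arc_eq_unitPt (i : Fin n) (ht : t * (t - 1) = 0) :
    W.arc i t = unitPt (2 * π / n * W.angle i t) := by
  rw [arc, unitPt_eq_expPlane, logArc, ht, ← zero_add (_ * Complex.I), ← Complex.ofReal_zero,
    ← Complex.mk_eq_add_mul_I]

lemma arc_zero (i : Fin n) : W.arc i 0 = bpoint n (2 * i) := by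
  rw [W.arc_eq_unitPt i (by norm_num), W.angle_zero, bpoint]
  congr 1
  push_cast
  ring

lemma arc_one (i : Fin n) : W.arc i 1 = bpoint n (2 * σ i + 1) := by
  rw [W.arc_eq_unitPt i (by norm_num), W.angle_one, bpoint]
  congr 1
  push_cast
  ring

lemma injective_endpoints :
    Function.Injective (Sum.elim (fun i => W.arc i 0) fun i => W.arc i 1) := by
  refine Function.Injective.sumElim (fun i j h => ?_) (fun i j h => ?_) fun i j h => ?_
  all_goals have hangle := (W.arc_eq_arc_iff.1 h).1
  · rw [W.angle_zero, W.angle_zero, Nat.cast_inj] at hangle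
    exact Fin.ext hangle
  · rw [W.angle_one, W.angle_one, add_left_inj, Nat.cast_inj] at hangle
    exact σ.injective (Fin.ext hangle)
  · rw [W.angle_zero, W.angle_one] at hangle
    exact natCast_notMem_exitPositions (n := n) i ⟨σ j, hangle.symm⟩

/-- The diagram formed by the arcs of the wiring `W`. -/
def preDiagram : PreDiagram n 0 where
  arc := W.arc
  loop := Fin.elim0
  arc_smooth i := contDiff_expPlane.comp (W.contDiff_logArc i)
  loop_smooth l := l.elim0
  loop_periodic l := l.elim0
  arc_immersed i t _ := W.deriv_arc_ne_zero i t
  loop_immersed l := l.elim0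
  arc_in_disk i t ht := by
    rw [W.norm_arc, Real.exp_le_one_iff]
    exact mul_nonpos_of_nonneg_of_nonpos ht.1 (sub_nonpos.2 ht.2)
  arc_interior i t ht := by
    rw [W.norm_arc, Real.exp_lt_one_iff]
    exact mul_neg_of_pos_of_neg ht.1 (sub_neg.2 ht.2)
  arc_start_bdry i := by rw [W.norm_arc, zero_mul, Real.exp_zero]
  arc_end_bdry i := by rw [W.norm_arc, sub_self, mul_zero, Real.exp_zero]
  arc_transverse_start i := by
    rw [W.inner_deriv_arc_arc]
    norm_num
  arc_transverse_end i := by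
    rw [W.inner_deriv_arc_arc]
    norm_num
  loop_in_disk l := l.elim0
  endpoints_distinct := W.injective_endpoints

lemma exists_angle_mem_exitPositions_of_arc_eq (ht : t ∈ Ioo (0 : ℝ) 1) (hne : (i, t) ≠ (j, t'))
    (h : W.arc i t = W.arc j t') :
    ∃ a, ∃ s ∈ Ioo (0 : ℝ) (1 / 3), W.angle a s ∈ exitPositions n ∧ W.arc a s = W.arc i t := by
  obtain ⟨hangle, rfl | rfl⟩ := W.arc_eq_arc_iff.1 h
  · have hij : i ≠ j := fun hij => hne (by rw [hij])
    obtain ⟨ht', hexit⟩ := W.angle_mem_exitPositions_of_eq hij hangle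
    exact ⟨i, t', ⟨ht.1, ht'⟩, hexit, rfl⟩
  rcases lt_trichotomy t (1 / 2) with hlt | rfl | hgt
  · obtain ⟨ht', hexit⟩ := W.angle_mem_exitPositions_of_eq_one_sub hlt hangle
    exact ⟨i, t, ⟨ht.1, ht'⟩, hexit, rfl⟩
  · have hij : i ≠ j := fun hij => hne (by rw [hij, sub_half])
    rw [sub_half] at hangle
    have := (W.angle_mem_exitPositions_of_eq hij hangle).1
    norm_num at this
  · nth_rw 1 [← sub_sub_cancel 1 t] at hangle
    obtain ⟨ht', hexit⟩ := W.angle_mem_exitPositions_of_eq_one_sub (by linarith) hangle.symm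
    exact ⟨j, 1 - t, ⟨sub_pos.2 ht.2, ht'⟩, hexit, h.symm⟩

lemma exists_exit_of_isMultiplePoint {p : Plane} (hp : W.preDiagram.IsMultiplePoint p) :
    ∃ a, ∃ s ∈ Ioo (0 : ℝ) (1 / 3), W.angle a s ∈ exitPositions n ∧ W.arc a s = p := by
  obtain ⟨⟨i, t⟩ | ⟨l, _⟩, hq, ⟨j, t'⟩ | ⟨l', _⟩, hq', hne⟩ := Set.not_subsingleton_iff.1 hp
  · obtain ⟨ht, rfl⟩ : t ∈ Ioo (0 : ℝ) 1 ∧ W.arc i t = p := hq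
    exact W.exists_angle_mem_exitPositions_of_arc_eq ht (by simpa using hne) hq'.2.symm
  · exact l'.elim0
  · exact l.elim0
  · exact l.elim0

lemma finite_multiplePoints : {p | W.preDiagram.IsMultiplePoint p}.Finite := by
  refine (Set.Finite.image2 W.arc finite_univ W.finite_angle_mem_exitPositions).subset ?_
  intro p hp
  obtain ⟨a, s, hs, hexit, hap⟩ := W.exists_exit_of_isMultiplePoint hp
  exact ⟨a, mem_univ a, s, ⟨hs.2, a, hexit⟩, hap⟩

lemma passages_of_isBalancedCrossing (hs : s ∈ Ioo (0 : ℝ) (1 / 3))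
    (hab : IsBalancedCrossing W.angle a b s) (hc : W.angle a s = (σ c : ℕ) + 1 / 2) :
    W.preDiagram.passages (W.arc a s) = {.inl (a, s), .inl (b, s), .inl (c, 1 - s)} := by
  have hin (l) : W.angle a s = W.angle l s ↔ l = a ∨ l = b := by rw [eq_comm, hab.eq_iff]
  have hout (l) : W.angle a s = W.angle l (1 - s) ↔ l = c := by
    rw [hc, W.angle_of_two_thirds_le l (by linarith [hs.2]), add_left_inj, Nat.cast_inj,
      ← Fin.ext_iff, σ.injective.eq_iff, eq_comm]
  ext q
  rcases q with ⟨l, u⟩ | ⟨l, u⟩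
  · change u ∈ Ioo (0 : ℝ) 1 ∧ W.arc l u = W.arc a s ↔ _
    rw [eq_comm, W.arc_eq_arc_iff]
    simp only [mem_insert_iff, mem_singleton_iff, Sum.inl.injEq, Prod.mk.injEq]
    constructor
    · rintro ⟨-, h, rfl | rfl⟩
      · rw [hin] at h
        tauto
      · rw [hout] at h
        tauto
    · have hsub : 1 - s ∈ Ioo (0 : ℝ) 1 := ⟨by linarith [hs.2], by linarith [hs.1]⟩
      have hs' : s ∈ Ioo (0 : ℝ) 1 := ⟨hs.1, by linarith [hs.2]⟩
      rintro (⟨rfl, rfl⟩ | ⟨rfl, rfl⟩ | ⟨rfl, rfl⟩)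
      · exact ⟨hs', rfl, .inl rfl⟩
      · exact ⟨hs', (hin l).2 (.inr rfl), .inl rfl⟩
      · exact ⟨hsub, (hout l).2 rfl, .inr rfl⟩
  · exact l.elim0

lemma isTriplePoint_arc (hs : s ∈ Ioo (0 : ℝ) (1 / 3)) (h : W.angle a s ∈ exitPositions n) :
    W.preDiagram.IsTriplePoint (W.arc a s) := by
  obtain ⟨b, c, hab, hc⟩ := W.exists_isBalancedCrossing_angle hs.2 h
  have hout : W.angle c (1 - s) = W.angle a s := by
    rw [W.angle_of_two_thirds_le c (by linarith [hs.2]), hc]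
  set z := W.logArc a s
  set d := 2 * π / n * deriv (W.angle a) s
  have hd : d ≠ 0 := mul_ne_zero (two_pi_div_natCast_pos a.pos).ne' hab.deriv_ne_zero
  have hza : deriv (W.arc a) s = expPlaneDeriv z ⟨2 * s - 1, d⟩ := W.deriv_arc a s
  have hzb : deriv (W.arc b) s = expPlaneDeriv z ⟨2 * s - 1, -d⟩ := by
    rw [W.deriv_arc, logArc, hab.apply_eq, hab.deriv_eq_neg, mul_neg]
    rfl
  have hzc : deriv (W.arc c) (1 - s) = expPlaneDeriv z ⟨1 - 2 * s, 0⟩ := by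
    have hdepth : (1 - s) * (1 - s - 1) = s * (s - 1) := by ring
    rw [W.deriv_arc, logArc, hout, hdepth, W.deriv_angle_of_two_thirds_lt c (by linarith [hs.2]),
      mul_zero, show 2 * (1 - s) - 1 = 1 - 2 * s by ring]
    rfl
  refine ⟨_, _, _, W.passages_of_isBalancedCrossing hs hab hc, ?_, 1, 1, 2, one_pos, one_pos,
    two_pos, ?_⟩
  · change LinearIndependent ℝ ![deriv (W.arc a) s, deriv (W.arc b) s]
    rw [hza, hzb]
    refine linearIndependent_expPlaneDeriv fun h => ?_
    have : 2 * ((2 * s - 1) * d) = 0 := by linarith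
    exact mul_ne_zero two_ne_zero (mul_ne_zero (by linarith [hs.2]) hd) this
  · change (1 : ℝ) • deriv (W.arc a) s + (1 : ℝ) • deriv (W.arc b) s +
      (2 : ℝ) • deriv (W.arc c) (1 - s) = 0
    rw [hza, hzb, hzc, ← map_smul, ← map_smul, ← map_smul, ← map_add, ← map_add]
    have hsum : (1 : ℝ) • (⟨2 * s - 1, d⟩ : ℂ) + (1 : ℝ) • ⟨2 * s - 1, -d⟩ +
        (2 : ℝ) • ⟨1 - 2 * s, 0⟩ = 0 := by
      apply Complex.ext <;>
        simp only [Complex.add_re, Complex.add_im, Complex.smul_re, Complex.smul_im, smul_eq_mul,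
          Complex.zero_re, Complex.zero_im] <;>
        ring
    rw [hsum, map_zero]

/-- The triple diagram built from the wiring `W`. -/
def tripleDiagram : TripleDiagram n 0 :=
  .ofIsTriplePoint W.preDiagram W.finite_multiplePoints fun _ hp => by
    obtain ⟨a, s, hs, hexit, rfl⟩ := W.exists_exit_of_isMultiplePoint hp
    exact W.isTriplePoint_arc hs hexit

theorem realizes_tripleDiagram : Realizes W.tripleDiagram σ :=
  fun i => ⟨W.arc_zero i, W.arc_one i⟩

end Arc

end Wiring

end

/-- **Theorem (generation).** For every `n ≥ 1` and every bijection `σ : Fin n → Fin n`,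
there is a triple diagram without closed strands (no loops) realizing `σ`: all `n!`
pairings of the 'in' boundary points with the 'out' boundary points are achievable by
triple diagrams consisting only of arcs. -/
theorem triple_diagram_generate (n : ℕ) (hn : 1 ≤ n) (σ : Equiv.Perm (Fin n)) :
    ∃ D : TripleDiagram n 0, Realizes D σ := by
  obtain ⟨W⟩ := Wiring.nonempty σ
  exact ⟨W.tripleDiagram, W.realizes_tripleDiagram⟩
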